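/- Let k ≥ 2 and suppose C_k^{>++} = { (a,b) ∈ ℝ⁺×ℝ⁺ : Φ_k^>(a,b)(T₁) = T₂ } is nonempty. Then there exist ν_k ≥ λ₁^m, μ_k ≥ λ₁^n and a strictly decreasing C¹ bijection f_k : (ν_k, +∞) → (μ_k, +∞) with f_k' < 0, such that C_k^{>++} = { (x, f_k(x)) : x ∈ (ν_k, +∞) }. In particular, C_k^{>++} is a hyperbolic-like curve: for each a ∈ (ν_k, ∞) there is exactly one b with (a,b) ∈ C_k^{>++}, and f_k(x) → +∞ as x → ν_k⁺. -/

import Mathlib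

open Set Filter Classical

noncomputable section

/-- `u c s` is the solution of `-(p·u')' + q·u = c·w·u` with `u c s s = 0` and
`(u c s)' s = 1/(p s)`; `u'` is its `t`-derivative. -/
def IsSolFamily (p q w : ℝ → ℝ) (u u' : ℝ → ℝ → ℝ → ℝ) : Prop :=
  ∀ c s : ℝ, u c s s = 0 ∧ u' c s s = 1 / p s ∧
    ∀ t : ℝ, HasDerivAt (u c s) (u' c s t) t ∧
      HasDerivAt (fun τ => p τ * u' c s τ) (q t * u c s t - c * w t * u c s t) t

/-- Zero set of `u c s` strictly after `s`. -/
def zeroSet (u : ℝ → ℝ → ℝ → ℝ) (c s : ℝ) : Set ℝ := {t | s < t ∧ u c s t = 0}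

/-- The zero-function `φ_c(s)`, valued in `EReal` (equal to `⊤` when `u c s`
never vanishes after `s`). -/
noncomputable def phiE (u : ℝ → ℝ → ℝ → ℝ) (c s : ℝ) : EReal :=
  if (zeroSet u c s).Nonempty then ((sInf (zeroSet u c s) : ℝ) : EReal) else ⊤

/-- The zero-function as a map `EReal → EReal` (`⊤` propagates). -/
noncomputable def phiStep (u : ℝ → ℝ → ℝ → ℝ) (c : ℝ) (x : EReal) : EReal :=
  if x = ⊤ ∨ x = ⊥ then ⊤ else phiE u c x.toReal

/-- `Φ_k^>(a,b)`: composition of `k` alternating zero-functions `φ_a^m, φ_b^n`,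
starting with `φ_a^m`. -/
noncomputable def PhiGt (uM uN : ℝ → ℝ → ℝ → ℝ) (a b : ℝ) : ℕ → EReal → EReal
  | 0 => id
  | k + 1 => (if k % 2 = 0 then phiStep uM a else phiStep uN b) ∘ PhiGt uM uN a b k

/-- `Φ_k^<(a,b)`: composition of `k` alternating zero-functions, starting with
`φ_b^n`. -/
noncomputable def PhiLt (uM uN : ℝ → ℝ → ℝ → ℝ) (a b : ℝ) : ℕ → EReal → EReal
  | 0 => id
  | k + 1 => (if k % 2 = 0 then phiStep uN b else phiStep uM a) ∘ PhiLt uM uN a b k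

/-- `C_k^{>++} = {(a,b) ∈ ℝ⁺×ℝ⁺ : Φ_k^>(a,b)(T₁) = T₂}`. -/
def CGt (uM uN : ℝ → ℝ → ℝ → ℝ) (T₁ T₂ : ℝ) (k : ℕ) : Set (ℝ × ℝ) :=
  {ab | 0 < ab.1 ∧ 0 < ab.2 ∧ PhiGt uM uN ab.1 ab.2 k (T₁ : EReal) = (T₂ : EReal)}

/-- `C_k^{<++} = {(a,b) ∈ ℝ⁺×ℝ⁺ : Φ_k^<(a,b)(T₁) = T₂}`. -/
def CLt (uM uN : ℝ → ℝ → ℝ → ℝ) (T₁ T₂ : ℝ) (k : ℕ) : Set (ℝ × ℝ) :=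
  {ab | 0 < ab.1 ∧ 0 < ab.2 ∧ PhiLt uM uN ab.1 ab.2 k (T₁ : EReal) = (T₂ : EReal)}

/-! If `u` solves the equation with parameters `(c₁, s₁)` and `v` with `(c₂, s₂)`, Lagrange's
identity gives `(c₁ - c₂) ∫ w u v` as a difference of boundary terms. On the interval from `s₂` to
the first zero of `v` these are divisible by the differences of the starting points and of the
zeros, so the zero-function has an exact difference quotient; letting the two parameters merge shows
that it is strictly differentiable in `(c, s)`. The energy identity `∫ (p u'² + q u²) = c ∫ w u²`
gives `∫ w u² > 0` when `c > 0` and excludes a zero when `c = 0`, whatever the sign of the weight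
`w`. Hence zero-functions are decreasing in `c ≥ 0`, increasing in `s`, and infinite at `c = 0`.

By the chain rule `(a, b) ↦ Φ_k^>(a, b)(T₁)` is then infinite on the axes and, where finite, has
negative partial derivatives. It decreases along every segment in the quadrant that points up and to
the right, so its level sets are antichains, which are graphs of decreasing functions, and these are
`C¹` by the implicit function theorem. The projections of a level set to the axes are open upper
sets, that is, open half-lines. -/

open Topology

theorem exists_eq_Ioi_of_isOpen_of_isUpperSet {α : Type*} [ConditionallyCompleteLinearOrder α]
    [DenselyOrdered α] [NoMinOrder α] [TopologicalSpace α] [OrderTopology α] {A : Set α}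
    (hopen : IsOpen A) (hup : IsUpperSet A) (hne : A.Nonempty) (hbdd : BddBelow A) :
    ∃ ν, A = Ioi ν := by
  refine ⟨sInf A, Subset.antisymm (fun a ha => ?_) fun a ha => ?_⟩
  · obtain ⟨a', hlt, ha'⟩ := Eventually.exists_lt (hopen.mem_nhds ha)
    exact (csInf_le hbdd ha').trans_lt hlt
  · obtain ⟨a', ha', hlt⟩ := exists_lt_of_csInf_lt hne ha
    exact hup hlt.le ha'

theorem tendsto_nhdsGT_atTop_of_antitoneOn {α β : Type*} [LinearOrder α] [TopologicalSpace α]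
    [OrderClosedTopology α] [LinearOrder β] {f : α → β} {ν : α} (hf : AntitoneOn f (Ioi ν))
    (hub : ¬BddAbove (f '' Ioi ν)) : Tendsto f (𝓝[>] ν) atTop := by
  refine tendsto_atTop.2 fun M => ?_
  obtain ⟨_, ⟨x₀, hx₀, rfl⟩, hM⟩ := not_bddAbove_iff.1 hub M
  filter_upwards [Ioo_mem_nhdsGT hx₀] with x hx
  exact hM.le.trans (hf hx.1 hx₀ hx.2.le)

theorem exists_strictAntiOn_graph_of_isAntichain {α β : Type*} [LinearOrder α] [LinearOrder β]
    [Nonempty β] {S : Set (α × β)} (hS : IsAntichain (· ≤ ·) S) :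
    ∃ f : α → β, StrictAntiOn f (Prod.fst '' S) ∧ f '' (Prod.fst '' S) = Prod.snd '' S ∧
      S = {x | x.1 ∈ Prod.fst '' S ∧ x.2 = f x.1} := by
  have hlt : ∀ {x y}, x ∈ S → y ∈ S → x.1 < y.1 → y.2 < x.2 := fun {x y} hx hy hxy => by
    by_contra! h
    exact hS hx hy (fun e => hxy.ne (congrArg Prod.fst e)) ⟨hxy.le, h⟩
  have hinj : ∀ {x y}, x ∈ S → y ∈ S → x.1 = y.1 → x = y := fun {x y} hx hy hxy =>
    (le_total x.2 y.2).elim (fun h => hS.eq hx hy ⟨hxy.le, h⟩)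
      fun h => (hS.eq hy hx ⟨hxy.ge, h⟩).symm
  choose! f hf using fun (a : α) (ha : a ∈ Prod.fst '' S) =>
    show ∃ b, (a, b) ∈ S by obtain ⟨x, hx, rfl⟩ := ha; exact ⟨x.2, hx⟩
  have hf_eq : ∀ {x}, x ∈ S → f x.1 = x.2 := fun {x} hx =>
    congrArg Prod.snd (hinj (hf x.1 (mem_image_of_mem _ hx)) hx rfl)
  refine ⟨f, fun a ha b hb hab => hlt (hf a ha) (hf b hb) hab, ?_, ?_⟩
  · rw [image_image]
    exact image_congr fun x hx => hf_eq hx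
  · ext x
    refine ⟨fun hx => ⟨mem_image_of_mem _ hx, (hf_eq hx).symm⟩, fun ⟨hx, hx₂⟩ => ?_⟩
    simpa only [← hx₂] using hf x.1 hx

theorem eventually_nhdsGT_lt_of_hasDerivAt_neg {g : ℝ → ℝ} {d x : ℝ} (hg : HasDerivAt g d x)
    (hd : d < 0) : ∀ᶠ t in 𝓝[>] x, g t < g x := by
  have hsign := eventually_nhdsWithin_sign_eq_of_deriv_neg (f := fun t => g t - g x) (x₀ := x)
    (by rwa [(hg.sub_const _).deriv]) (sub_self _)
  filter_upwards [nhdsWithin_le_nhds hsign, self_mem_nhdsWithin] with t ht (hxt : x < t)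
  rwa [sign_neg (sub_neg.2 hxt), sign_eq_neg_one_iff, sub_neg] at ht

theorem lt_of_forall_eventually_nhdsGT_lt {α β : Type*} [ConditionallyCompleteLinearOrder α]
    [DenselyOrdered α] [TopologicalSpace α] [OrderTopology α] [LinearOrder β] [TopologicalSpace β]
    [OrderClosedTopology β] {f : α → β} {a b : α} (hab : a < b) (hf : ContinuousOn f (Icc a b))
    (h : ∀ x ∈ Ico a b, f x ≤ f a → ∀ᶠ y in 𝓝[>] x, f y < f x) : f b < f a := by
  have : (𝓝[>] a).NeBot := nhdsGT_neBot_of_exists_gt ⟨b, hab⟩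
  obtain ⟨c, hca, hc⟩ := ((h a (left_mem_Ico.2 hab) le_rfl).and (Ioo_mem_nhdsGT hab)).exists
  have hclosed : IsClosed ({x | f x ≤ f c} ∩ Icc c b) := by
    rw [inter_comm]
    exact (hf.mono (Icc_subset_Icc_left hc.1.le)).preimage_isClosed_of_isClosed isClosed_Icc
      isClosed_Iic
  have hsub := hclosed.Icc_subset_of_forall_mem_nhdsWithin (le_refl (f c)) fun x hx =>
    (h x ⟨hc.1.le.trans hx.2.1, hx.2.2⟩ (hx.1.trans hca.le)).mono fun y hy => hy.le.trans hx.1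
  exact (hsub (right_mem_Icc.2 hc.2.le) : f b ≤ f c).trans_lt hca

theorem lt_of_hasFDerivAt_neg_of_ne_top {E : Type*} [NormedAddCommGroup E] [NormedSpace ℝ E]
    {F : E → EReal} {x y : E} (hF : ContinuousOn F (segment ℝ x y))
    (hbot : ∀ z ∈ segment ℝ x y, F z ≠ ⊥)
    (hderiv : ∀ z ∈ segment ℝ x y, F z ≠ ⊤ →
      ∃ L : E →L[ℝ] ℝ, HasFDerivAt (fun z => (F z).toReal) L z ∧ L (y - x) < 0)
    (hx : F x ≠ ⊤) : F y < F x := by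
  set γ : ℝ → E := ⇑(AffineMap.lineMap x y : ℝ →ᵃ[ℝ] E)
  have hmem : MapsTo γ (Icc 0 1) (segment ℝ x y) := fun t ht =>
    segment_eq_image_lineMap ℝ x y ▸ mem_image_of_mem _ ht
  have hFγ : ContinuousOn (F ∘ γ) (Icc 0 1) :=
    hF.comp AffineMap.lineMap_continuous.continuousOn hmem
  have hdecr : ∀ t ∈ Ico (0 : ℝ) 1, F (γ t) ≠ ⊤ → ∀ᶠ r in 𝓝[>] t, F (γ r) < F (γ t) := by
    intro t ht htop
    have ht' := Ico_subset_Icc_self ht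
    have hIcc : Icc (0 : ℝ) 1 ∈ 𝓝[>] t :=
      mem_of_superset (Ioo_mem_nhdsGT ht.2) fun r hr => ⟨ht.1.trans hr.1.le, hr.2.le⟩
    obtain ⟨L, hL, hneg⟩ := hderiv _ (hmem ht') htop
    have hcont : Tendsto (fun r => F (γ r)) (𝓝[>] t) (𝓝 (F (γ t))) :=
      (hFγ t ht').mono_left (nhdsWithin_le_of_mem hIcc)
    filter_upwards [hcont.eventually_ne htop, hIcc, eventually_nhdsGT_lt_of_hasDerivAt_neg
      (hL.comp_hasDerivAt t AffineMap.hasDerivAt_lineMap) hneg] with r hr hr_mem hlt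
    rw [← EReal.coe_toReal htop (hbot _ (hmem ht')),
      ← EReal.coe_toReal hr (hbot _ (hmem hr_mem))]
    exact EReal.coe_lt_coe_iff.2 hlt
  have hγ₀ : γ 0 = x := AffineMap.lineMap_apply_zero x y
  have hγ₁ : γ 1 = y := AffineMap.lineMap_apply_one x y
  have hlt := lt_of_forall_eventually_nhdsGT_lt zero_lt_one hFγ fun t ht hle =>
    hdecr t ht (ne_top_of_le_ne_top (by rwa [Function.comp_apply, hγ₀]) hle)
  rwa [Function.comp_apply, Function.comp_apply, hγ₀, hγ₁] at hlt

theorem hasStrictFDerivAt_of_eventually_sub_eq {𝕜 E F : Type*} [NontriviallyNormedField 𝕜]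
    [NormedAddCommGroup E] [NormedSpace 𝕜 E] [NormedAddCommGroup F] [NormedSpace 𝕜 F]
    {f : E → F} {A : E × E → E →L[𝕜] F} {f' : E →L[𝕜] F} {x : E}
    (hf : ∀ᶠ y in 𝓝 (x, x), f y.1 - f y.2 = A y (y.1 - y.2))
    (hA : Tendsto A (𝓝 (x, x)) (𝓝 f')) : HasStrictFDerivAt f f' x := by
  refine .of_isLittleO (Asymptotics.isLittleO_iff.2 fun ε hε => ?_)
  filter_upwards [hf, hA.eventually (Metric.ball_mem_nhds f' hε)] with y hy hAy
  rw [hy, ← sub_apply]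
  exact (A y - f').le_of_opNorm_le (mem_ball_iff_norm.1 hAy).le _

theorem hasStrictFDerivAt_prod_of_eventually_sub_mul_eq
    {f : ℝ × ℝ → ℝ} {D M N : (ℝ × ℝ) × ℝ × ℝ → ℝ} {d m n : ℝ} {x : ℝ × ℝ}
    (hf : ∀ᶠ y in 𝓝 (x, x),
      (f y.1 - f y.2) * D y = (y.1.1 - y.2.1) * M y + (y.1.2 - y.2.2) * N y)
    (hD : Tendsto D (𝓝 (x, x)) (𝓝 d)) (hM : Tendsto M (𝓝 (x, x)) (𝓝 m))
    (hN : Tendsto N (𝓝 (x, x)) (𝓝 n)) (hd : d ≠ 0) :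
    HasStrictFDerivAt f ((m / d) • .fst ℝ ℝ ℝ + (n / d) • .snd ℝ ℝ ℝ : ℝ × ℝ →L[ℝ] ℝ) x := by
  have hM' := (hM.div hD hd).smul_const (ContinuousLinearMap.fst ℝ ℝ ℝ)
  have hN' := (hN.div hD hd).smul_const (ContinuousLinearMap.snd ℝ ℝ ℝ)
  refine hasStrictFDerivAt_of_eventually_sub_eq ?_ (hM'.add hN')
  filter_upwards [hf, hD.eventually_ne hd] with y hy hDy
  simp only [add_apply, smul_apply, ContinuousLinearMap.coe_fst',
    ContinuousLinearMap.coe_snd', Prod.fst_sub, Prod.snd_sub, smul_eq_mul, Pi.div_apply]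
  field_simp
  linear_combination hy

theorem contDiffOn_one_of_hasStrictFDerivAt {𝕜 E F : Type*} [NontriviallyNormedField 𝕜]
    [NormedAddCommGroup E] [NormedSpace 𝕜 E] [NormedAddCommGroup F] [NormedSpace 𝕜 F]
    {f : E → F} {f' : E → E →L[𝕜] F} {s : Set E} (hs : IsOpen s)
    (hf : ∀ x ∈ s, HasStrictFDerivAt f (f' x) x) : ContDiffOn 𝕜 1 f s := by
  have hderiv : ∀ x ∈ s, HasFDerivAt f (f' x) x := fun x hx => (hf x hx).hasFDerivAt
  have hcont : ContinuousOn f' s := by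
    refine fun x hx => Metric.tendsto_nhds.2 fun ε hε => ?_
    have happrox := (hf x hx).isLittleO.bound (half_pos hε)
    have hdiag : ∀ᶠ y in 𝓝 x, ∀ᶠ z in 𝓝 y,
        ‖f z - f y - f' x (z - y)‖ ≤ ε / 2 * ‖z - y‖ := by
      have hxx := (by fun_prop : Continuous fun y : E => (y, y)).tendsto x
      filter_upwards [hxx.eventually happrox.eventually_nhds] with y hy
      exact (by fun_prop : Continuous fun z : E => (z, y)).continuousAt.eventually hy
    filter_upwards [nhdsWithin_le_nhds hdiag, self_mem_nhdsWithin] with y hy hys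
    have hsub : HasFDerivAt (fun z => f z - f' x z) (f' y - f' x) y :=
      (hderiv y hys).sub (f' x).hasFDerivAt
    rw [dist_eq_norm]
    refine (hsub.le_of_lip' (half_pos hε).le (hy.mono fun z hz => ?_)).trans_lt (half_lt_self hε)
    rwa [sub_sub_sub_comm, ← map_sub]
  rw [← zero_add 1, contDiffOn_succ_iff_fderiv_of_isOpen hs, contDiffOn_zero]
  refine ⟨fun x hx => (hderiv x hx).differentiableAt.differentiableWithinAt, nofun, ?_⟩
  exact hcont.congr fun x hx => (hderiv x hx).fderiv

theorem exists_hasStrictDerivAt_of_hasStrictFDerivAt {G : ℝ × ℝ → ℝ} {L : ℝ × ℝ →L[ℝ] ℝ}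
    {x : ℝ × ℝ} (hG : HasStrictFDerivAt G L x) (hL : L (0, 1) ≠ 0) :
    ∃ ψ : ℝ → ℝ, ψ x.1 = x.2 ∧ (∀ᶠ t in 𝓝 x.1, G (t, ψ t) = G x) ∧
      HasStrictDerivAt ψ (-(L (1, 0) / L (0, 1))) x.1 := by
  have hinv : (L ∘L .inr ℝ ℝ ℝ).IsInvertible :=
    ⟨ContinuousLinearEquiv.unitsEquivAut ℝ (Units.mk0 _ hL), by ext; simp⟩
  set ψ := hG.implicitFunctionOfProdDomain hinv
  have hψx : ψ x.1 = x.2 :=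
    (hG.eventually_apply_eq_iff_implicitFunctionOfProdDomain hinv).self_of_nhds.1 rfl
  have hψG : ∀ᶠ t in 𝓝 x.1, G (t, ψ t) = G x :=
    hG.eventually_apply_implicitFunctionOfProdDomain hinv
  have hψ := (hG.hasStrictFDerivAt_implicitFunctionOfProdDomain hinv).hasStrictDerivAt
  set d := (-(L ∘L .inr ℝ ℝ ℝ).inverse ∘L (L ∘L .inl ℝ ℝ ℝ)) 1
  have hd : L (1, d) = 0 := by
    have hGψ : HasStrictDerivAt (fun t => G (t, ψ t)) (L (1, d)) x.1 :=
      HasStrictFDerivAt.comp_hasStrictDerivAt_of_eq x.1 hG ((hasStrictDerivAt_id x.1).prodMk hψ)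
        (Prod.ext rfl hψx.symm)
    exact hGψ.hasDerivAt.unique ((hasDerivAt_const x.1 (G x)).congr_of_eventuallyEq hψG)
  have hd_eq : d = -(L (1, 0) / L (0, 1)) := by
    have hsplit : L (1, d) = L (1, 0) + d * L (0, 1) := by
      rw [← smul_eq_mul, ← map_smul, ← map_add]; simp
    field_simp
    linarith
  exact ⟨ψ, hψx, hψG, hd_eq ▸ hψ⟩

/-- The part of the level set `{F = T}` in the open first quadrant. The curve `CGt` is of this form,
with `F` the composition of zero-functions as a function of the two parameters. -/
def quadrantLevelSet (F : ℝ × ℝ → EReal) (T : ℝ) : Set (ℝ × ℝ) :=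
  {y | 0 < y.1 ∧ 0 < y.2 ∧ F y = T}

/-- Functions which on the closed first quadrant equal `⊤` along the axes and have negative partial
derivatives wherever they are finite. Continuity is required in `EReal`, so that the function tends
to `⊤` at the boundary of the region where it is finite. -/
structure IsDecreasingOffAxes (F : ℝ × ℝ → EReal) : Prop where
  continuous : Continuous F
  ne_bot : ∀ y, F y ≠ ⊥
  pos_of_ne_top : ∀ {y}, 0 ≤ y → F y ≠ ⊤ → 0 < y.1 ∧ 0 < y.2
  exists_hasStrictFDerivAt : ∀ {y}, 0 ≤ y → F y ≠ ⊤ → ∃ L : ℝ × ℝ →L[ℝ] ℝ,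
    HasStrictFDerivAt (fun y => (F y).toReal) L y ∧ L (1, 0) < 0 ∧ L (0, 1) < 0

namespace IsDecreasingOffAxes

variable {F : ℝ × ℝ → EReal} {T : ℝ} {y y' : ℝ × ℝ}

theorem lt_of_lt (hF : IsDecreasingOffAxes F) (hy : 0 ≤ y) (hyy' : y < y') (hfin : F y ≠ ⊤) :
    F y' < F y := by
  refine lt_of_hasFDerivAt_neg_of_ne_top hF.continuous.continuousOn (fun z _ => hF.ne_bot z)
    (fun z hz htop => ?_) hfin
  obtain ⟨L, hL, h₁, h₂⟩ :=
    hF.exists_hasStrictFDerivAt (hy.trans (segment_subset_Icc hyy'.le hz).1) htop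
  refine ⟨L, hL.hasFDerivAt, ?_⟩
  have hsplit : L (y' - y) = (y'.1 - y.1) * L (1, 0) + (y'.2 - y.2) * L (0, 1) := by
    rw [← smul_eq_mul, ← smul_eq_mul, ← map_smul, ← map_smul, ← map_add]
    exact congrArg L (by ext <;> simp)
  rw [hsplit]
  obtain ⟨h, h'⟩ | ⟨h, h'⟩ := Prod.lt_iff.1 hyy'
  · exact add_neg_of_neg_of_nonpos (mul_neg_of_pos_of_neg (sub_pos.2 h) h₁)
      (mul_nonpos_of_nonneg_of_nonpos (sub_nonneg.2 h') h₂.le)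
  · exact add_neg_of_nonpos_of_neg (mul_nonpos_of_nonneg_of_nonpos (sub_nonneg.2 h) h₁.le)
      (mul_neg_of_pos_of_neg (sub_pos.2 h') h₂)

theorem comp_swap (hF : IsDecreasingOffAxes F) : IsDecreasingOffAxes (F ∘ Prod.swap) where
  continuous := hF.continuous.comp continuous_swap
  ne_bot y := hF.ne_bot y.swap
  pos_of_ne_top hy hfin := (hF.pos_of_ne_top (Prod.swap_le_swap.2 hy) hfin).symm
  exists_hasStrictFDerivAt {y} hy hfin := by
    obtain ⟨L, hL, h₁, h₂⟩ := hF.exists_hasStrictFDerivAt (Prod.swap_le_swap.2 hy) hfin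
    exact ⟨L ∘L (ContinuousLinearEquiv.prodComm ℝ ℝ ℝ), hL.comp y
      (ContinuousLinearEquiv.prodComm ℝ ℝ ℝ).hasStrictFDerivAt, h₂, h₁⟩

theorem isAntichain_quadrantLevelSet (hF : IsDecreasingOffAxes F) (T : ℝ) :
    IsAntichain (· ≤ ·) (quadrantLevelSet F T) := fun y hy y' hy' hne hle => by
  have hlt := hF.lt_of_lt ⟨hy.1.le, hy.2.1.le⟩ (hle.lt_of_ne hne) (hy.2.2 ▸ EReal.coe_ne_top T)
  exact hlt.ne (hy'.2.2.trans hy.2.2.symm)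

theorem fst_image_quadrantLevelSet (hF : IsDecreasingOffAxes F) (T : ℝ) :
    Prod.fst '' quadrantLevelSet F T = Prod.fst '' {y | 0 < y.1 ∧ 0 < y.2 ∧ F y < T} := by
  refine Subset.antisymm ?_ ?_
  · rintro _ ⟨⟨a, b⟩, ⟨ha, hb, hT⟩, rfl⟩
    refine ⟨(a, b + 1), ⟨ha, hb.trans (lt_add_one b), hT ▸ hF.lt_of_lt ⟨ha.le, hb.le⟩ ?_ ?_⟩, rfl⟩
    · exact Prod.mk_lt_mk_iff_right.2 (lt_add_one b)
    · exact hT ▸ EReal.coe_ne_top T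
  · rintro _ ⟨⟨a, b⟩, ⟨ha, hb, hT⟩, rfl⟩
    have haxis : F (a, 0) = ⊤ := by
      by_contra hfin
      exact (hF.pos_of_ne_top (y := (a, 0)) ⟨ha.le, le_rfl⟩ hfin).2.false
    have hcont : Continuous fun b => F (a, b) := hF.continuous.comp (by fun_prop)
    obtain ⟨b', hb', hT'⟩ := intermediate_value_Ioo' hb.le hcont.continuousOn
      ⟨hT, (EReal.coe_lt_top T).trans_eq haxis.symm⟩
    exact ⟨(a, b'), ⟨ha, hb'.1, hT'⟩, rfl⟩

theorem exists_fst_image_quadrantLevelSet_eq_Ioi (hF : IsDecreasingOffAxes F)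
    (hne : (quadrantLevelSet F T).Nonempty) :
    ∃ ν, Prod.fst '' quadrantLevelSet F T = Ioi ν := by
  refine exists_eq_Ioi_of_isOpen_of_isUpperSet ?_ ?_ (hne.image _) ⟨0, ?_⟩
  · rw [hF.fst_image_quadrantLevelSet]
    exact isOpenMap_fst _ ((isOpen_lt continuous_const continuous_fst).inter
      ((isOpen_lt continuous_const continuous_snd).inter
        (isOpen_lt hF.continuous continuous_const)))
  · rw [hF.fst_image_quadrantLevelSet]
    rintro _ a' haa' ⟨⟨a, b⟩, ⟨ha, hb, hT⟩, rfl⟩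
    obtain rfl | hlt := haa'.eq_or_lt
    · exact ⟨(a, b), ⟨ha, hb, hT⟩, rfl⟩
    · exact ⟨(a', b), ⟨ha.trans hlt, hb, (hF.lt_of_lt ⟨ha.le, hb.le⟩ (Prod.mk_lt_mk_iff_left.2 hlt)
        (hT.trans_le le_top).ne).trans hT⟩, rfl⟩
  · rintro _ ⟨y, hy, rfl⟩
    exact hy.1.le

theorem exists_snd_image_quadrantLevelSet_eq_Ioi (hF : IsDecreasingOffAxes F)
    (hne : (quadrantLevelSet F T).Nonempty) :
    ∃ μ, Prod.snd '' quadrantLevelSet F T = Ioi μ := by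
  have hswap : Prod.swap '' quadrantLevelSet (F ∘ Prod.swap) T = quadrantLevelSet F T := by
    rw [image_swap_eq_preimage_swap]
    ext y
    exact and_left_comm
  rw [← hswap, image_image]
  exact hF.comp_swap.exists_fst_image_quadrantLevelSet_eq_Ioi (image_nonempty.1 (hswap ▸ hne))

theorem exists_hasStrictDerivAt_of_quadrantLevelSet_eq_graph (hF : IsDecreasingOffAxes F)
    {f : ℝ → ℝ} {s : Set ℝ} (hgraph : quadrantLevelSet F T = {y | y.1 ∈ s ∧ y.2 = f y.1})
    {x : ℝ} (hx : x ∈ s) : ∃ d < 0, HasStrictDerivAt f d x := by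
  obtain ⟨hx₁, hx₂, hxT⟩ : (x, f x) ∈ quadrantLevelSet F T := hgraph ▸ ⟨hx, rfl⟩
  have htop : F (x, f x) ≠ ⊤ := hxT ▸ EReal.coe_ne_top T
  obtain ⟨L, hL, h₁, h₂⟩ := hF.exists_hasStrictFDerivAt ⟨hx₁.le, hx₂.le⟩ htop
  obtain ⟨ψ, hψx, hψT, hψ⟩ := exists_hasStrictDerivAt_of_hasStrictFDerivAt hL h₂.ne
  have hψc : ContinuousAt (fun t => (t, ψ t)) x :=
    continuousAt_id.prodMk hψ.hasDerivAt.continuousAt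
  have hnear : ∀ᶠ t in 𝓝 x, F (t, ψ t) ≠ ⊤ :=
    (hF.continuous.continuousAt.comp hψc).eventually_ne (by rwa [Function.comp_apply, hψx])
  have hψf : ψ =ᶠ[𝓝 x] f := by
    filter_upwards [hψT, hnear, eventually_gt_nhds hx₁,
      hψ.hasDerivAt.continuousAt.eventually_const_lt (hψx.symm ▸ hx₂)] with t ht ht_top ht₁ ht₂
    have hmem : (t, ψ t) ∈ quadrantLevelSet F T := ⟨ht₁, ht₂, by
      rw [← EReal.coe_toReal ht_top (hF.ne_bot _), ht, hxT, EReal.toReal_coe]⟩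
    exact (hgraph ▸ hmem : (t, ψ t) ∈ {y : ℝ × ℝ | y.1 ∈ s ∧ y.2 = f y.1}).2
  exact ⟨_, neg_neg_of_pos (div_pos_of_neg_of_neg h₁ h₂), hψ.congr_of_eventuallyEq hψf⟩

theorem exists_quadrantLevelSet_eq_graph (hF : IsDecreasingOffAxes F)
    (hne : (quadrantLevelSet F T).Nonempty) :
    ∃ ν μ : ℝ, ∃ f : ℝ → ℝ, StrictAntiOn f (Ioi ν) ∧ ContDiffOn ℝ 1 f (Ioi ν) ∧
      (∀ x ∈ Ioi ν, deriv f x < 0) ∧ f '' Ioi ν = Ioi μ ∧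
      quadrantLevelSet F T = {y | y.1 ∈ Ioi ν ∧ y.2 = f y.1} ∧ Tendsto f (𝓝[>] ν) atTop := by
  obtain ⟨ν, hν⟩ := hF.exists_fst_image_quadrantLevelSet_eq_Ioi hne
  obtain ⟨μ, hμ⟩ := hF.exists_snd_image_quadrantLevelSet_eq_Ioi hne
  obtain ⟨f, hanti, himage, hgraph⟩ :=
    exists_strictAntiOn_graph_of_isAntichain (hF.isAntichain_quadrantLevelSet T)
  rw [hν] at hanti himage hgraph
  rw [hμ] at himage
  have hderiv : ∀ x ∈ Ioi ν, HasStrictDerivAt f (deriv f x) x ∧ deriv f x < 0 := fun x hx => by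
    obtain ⟨d, hd, hfd⟩ := hF.exists_hasStrictDerivAt_of_quadrantLevelSet_eq_graph hgraph hx
    rw [hfd.hasDerivAt.deriv]
    exact ⟨hfd, hd⟩
  refine ⟨ν, μ, f, hanti, ?_, fun x hx => (hderiv x hx).2, himage, hgraph, ?_⟩
  · exact contDiffOn_one_of_hasStrictFDerivAt isOpen_Ioi fun x hx =>
      (hderiv x hx).1.hasStrictFDerivAt
  · exact tendsto_nhdsGT_atTop_of_antitoneOn hanti.antitoneOn (himage ▸ not_bddAbove_Ioi μ)

end IsDecreasingOffAxes

theorem eq_zero_of_hasDerivAt_mul_of_eq_zero_right {α β x y : ℝ → ℝ} {a b : ℝ}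
    (hα : ContinuousOn α (Icc a b)) (hβ : ContinuousOn β (Icc a b))
    (hx : ∀ t ∈ Icc a b, HasDerivAt x (α t * y t) t)
    (hy : ∀ t ∈ Icc a b, HasDerivAt y (β t * x t) t) (hxb : x b = 0) (hyb : y b = 0) :
    ∀ t ∈ Icc a b, x t = 0 ∧ y t = 0 := by
  obtain ⟨A, hA⟩ := isCompact_Icc.exists_bound_of_continuousOn hα
  obtain ⟨B, hB⟩ := isCompact_Icc.exists_bound_of_continuousOn hβ
  set v : ℝ → ℝ × ℝ → ℝ × ℝ := fun t z => (α t * z.2, β t * z.1)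
  have hv : ∀ t ∈ Ioc a b, LipschitzOnWith (A ⊔ B).toNNReal (v t) univ := by
    intro t ht
    have hle : ‖α t‖ ⊔ ‖β t‖ ≤ (A ⊔ B).toNNReal :=
      (sup_le_sup (hA t (Ioc_subset_Icc_self ht)) (hB t (Ioc_subset_Icc_self ht))).trans
        (Real.le_coe_toNNReal _)
    refine LipschitzOnWith.of_dist_le_mul fun z _ z' _ => ?_
    simp only [v, Prod.dist_eq, Real.dist_eq, ← mul_sub, abs_mul]
    refine max_le ?_ ?_
    · exact mul_le_mul (le_sup_left.trans hle) (le_max_right _ _) (abs_nonneg _) NNReal.zero_le_coe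
    · exact mul_le_mul (le_sup_right.trans hle) (le_max_left _ _) (abs_nonneg _) NNReal.zero_le_coe
  have hxy : ∀ t ∈ Icc a b, HasDerivAt (fun t => (x t, y t)) (v t (x t, y t)) t :=
    fun t ht => (hx t ht).prodMk (hy t ht)
  have heq := ODE_solution_unique_of_mem_Icc_left (g := fun _ => 0) hv
    (fun t ht => (hxy t ht).continuousAt.continuousWithinAt)
    (fun t ht => (hxy t (Ioc_subset_Icc_self ht)).hasDerivWithinAt) (fun _ _ => mem_univ _)
    continuousOn_const (fun t _ => by simpa [v] using! hasDerivWithinAt_const t (Iic t) (0 : ℝ × ℝ))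
    (fun _ _ => mem_univ _) (Prod.ext hxb hyb)
  exact fun t ht => Prod.ext_iff.1 (heq ht)

/-- The average of `v` over the segment from `x` to `y`, parametrized by `[0, 1]` so that it also
makes sense, with value `v x`, when `x = y`. It is used as the difference quotient of a primitive of
`v` that stays continuous on the diagonal. -/
def segmentAverage (v : ℝ → ℝ) (x y : ℝ) : ℝ := ∫ θ in (0 : ℝ)..1, v (x + θ * (y - x))

theorem segmentAverage_self (v : ℝ → ℝ) (x : ℝ) : segmentAverage v x x = v x := by
  simp [segmentAverage]

theorem sub_mul_segmentAverage (v : ℝ → ℝ) (x y : ℝ) :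
    (y - x) * segmentAverage v x y = ∫ t in x..y, v t := by
  simpa [segmentAverage, mul_comm] using
    intervalIntegral.mul_integral_comp_add_mul (f := v) (a := 0) (b := 1) (y - x) x

theorem continuous_segmentAverage {X : Type*} [TopologicalSpace X] {v : X → ℝ → ℝ} {x y : X → ℝ}
    (hv : Continuous v.uncurry) (hx : Continuous x) (hy : Continuous y) :
    Continuous fun i => segmentAverage (v i) (x i) (y i) := by
  unfold segmentAverage
  fun_prop

theorem phiE_eq_top_or_coe (u : ℝ → ℝ → ℝ → ℝ) (c s : ℝ) :
    phiE u c s = ⊤ ∨ ∃ z : ℝ, phiE u c s = z := by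
  unfold phiE
  split_ifs
  exacts [.inr ⟨_, rfl⟩, .inl rfl]

theorem phiE_le_of_apply_eq_zero {u : ℝ → ℝ → ℝ → ℝ} {c s t : ℝ} (hst : s < t)
    (ht : u c s t = 0) : phiE u c s ≤ t := by
  have hmem : t ∈ zeroSet u c s := ⟨hst, ht⟩
  rw [phiE, if_pos ⟨t, hmem⟩, EReal.coe_le_coe_iff]
  exact csInf_le ⟨s, fun _ hr => hr.1.le⟩ hmem

@[simp]
theorem phiStep_top (u : ℝ → ℝ → ℝ → ℝ) (c : ℝ) : phiStep u c ⊤ = ⊤ := by simp [phiStep]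

@[simp]
theorem phiStep_coe (u : ℝ → ℝ → ℝ → ℝ) (c s : ℝ) : phiStep u c s = phiE u c s := by
  simp [phiStep]

/-- A family of functions `u c s` of one variable, with derivatives `u' c s`, which start from `0`
at `s` with positive slope and cross `0` transversally afterwards. This is all that is needed for
the first zero `phiE u c s` after `s` to be a continuous function of `(c, s)`. -/
structure IsTransversalFamily (u u' : ℝ → ℝ → ℝ → ℝ) : Prop where
  continuous_deriv : Continuous fun x : ℝ × ℝ × ℝ => u' x.1 x.2.1 x.2.2
  hasDerivAt : ∀ c s t, HasDerivAt (u c s) (u' c s t) t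
  apply_self : ∀ c s, u c s s = 0
  deriv_self_pos : ∀ c s, 0 < u' c s s
  deriv_ne_zero : ∀ {c s t}, s < t → u c s t = 0 → u' c s t ≠ 0

namespace IsTransversalFamily

variable {u u' : ℝ → ℝ → ℝ → ℝ} {c s t z : ℝ} {x : EReal}

theorem apply_sub_apply (hu : IsTransversalFamily u u') (c s r t : ℝ) :
    u c s t - u c s r = (t - r) * segmentAverage (u' c s) r t := by
  have hcont : Continuous (u' c s) := hu.continuous_deriv.comp (by fun_prop : Continuous (c, s, ·))
  rw [sub_mul_segmentAverage, intervalIntegral.integral_eq_sub_of_hasDerivAt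
    (fun _ _ => hu.hasDerivAt c s _) (hcont.intervalIntegrable r t)]

theorem eq_mul_segmentAverage (hu : IsTransversalFamily u u') (c s t : ℝ) :
    u c s t = (t - s) * segmentAverage (u' c s) s t := by
  rw [← hu.apply_sub_apply, hu.apply_self, sub_zero]

theorem continuous_segmentAverage_deriv (hu : IsTransversalFamily u u') :
    Continuous fun x : ℝ × ℝ × ℝ => segmentAverage (u' x.1 x.2.1) x.2.1 x.2.2 :=
  continuous_segmentAverage (v := fun x : ℝ × ℝ × ℝ => u' x.1 x.2.1)
    (hu.continuous_deriv.comp (by fun_prop : Continuous fun y : (ℝ × ℝ × ℝ) × ℝ =>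
      (y.1.1, y.1.2.1, y.2))) (by fun_prop) (by fun_prop)

theorem continuous (hu : IsTransversalFamily u u') :
    Continuous fun x : ℝ × ℝ × ℝ => u x.1 x.2.1 x.2.2 := by
  simp only [hu.eq_mul_segmentAverage]
  exact (by fun_prop : Continuous fun x : ℝ × ℝ × ℝ => x.2.2 - x.2.1).mul
    hu.continuous_segmentAverage_deriv

theorem continuous_apply (hu : IsTransversalFamily u u') (c s : ℝ) : Continuous (u c s) :=
  hu.continuous.comp (by fun_prop : Continuous (c, s, ·))

theorem eventually_pos (hu : IsTransversalFamily u u') (c s : ℝ) :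
    ∀ᶠ t in 𝓝[>] s, 0 < u c s t := by
  have hD : Continuous (segmentAverage (u' c s) s) :=
    hu.continuous_segmentAverage_deriv.comp (by fun_prop : Continuous (c, s, ·))
  have hpos : ∀ᶠ t in 𝓝 s, 0 < segmentAverage (u' c s) s t := hD.continuousAt.eventually_const_lt
    ((hu.deriv_self_pos c s).trans_eq (segmentAverage_self _ _).symm)
  filter_upwards [nhdsWithin_le_nhds hpos, self_mem_nhdsWithin] with t ht (hst : s < t)
  exact (hu.eq_mul_segmentAverage c s t).symm ▸ mul_pos (sub_pos.2 hst) ht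

theorem phiE_lt_of_neg (hu : IsTransversalFamily u u') (hst : s < t) (ht : u c s t < 0) :
    phiE u c s < t := by
  obtain ⟨r, hr, hsr, hrt⟩ := ((hu.eventually_pos c s).and (Ioo_mem_nhdsGT hst)).exists
  obtain ⟨x, hx, hx₀⟩ := intermediate_value_Icc' hrt.le (hu.continuous_apply c s).continuousOn
    ⟨ht.le, hr.le⟩
  have hxt : x ≠ t := by rintro rfl; exact ht.ne hx₀
  exact (phiE_le_of_apply_eq_zero (hsr.trans_le hx.1) hx₀).trans_lt
    (EReal.coe_lt_coe_iff.2 (hx.2.lt_of_ne hxt))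

theorem pos_of_lt_phiE (hu : IsTransversalFamily u u') (hst : s < t) (ht : t < phiE u c s) :
    0 < u c s t := by
  refine (lt_or_eq_of_le (le_of_not_gt fun h => ?_)).resolve_right fun h => ?_
  · exact ht.not_gt (hu.phiE_lt_of_neg hst h)
  · exact ht.not_ge (phiE_le_of_apply_eq_zero hst h.symm)

theorem self_lt_phiE (hu : IsTransversalFamily u u') (c s : ℝ) : (s : EReal) < phiE u c s := by
  unfold phiE
  split_ifs with h
  · obtain ⟨r, hsr, hr⟩ := (mem_nhdsGT_iff_exists_Ioo_subset).1 (hu.eventually_pos c s)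
    refine EReal.coe_lt_coe_iff.2 (hsr.trans_le (le_csInf h fun t ht => ?_))
    by_contra! htr
    exact (hr ⟨ht.1, htr⟩ : 0 < u c s t).ne' ht.2
  · exact EReal.coe_lt_top s

theorem phiE_ne_bot (hu : IsTransversalFamily u u') (c s : ℝ) : phiE u c s ≠ ⊥ :=
  ((EReal.bot_lt_coe s).trans (hu.self_lt_phiE c s)).ne'

theorem lt_of_phiE_eq (hu : IsTransversalFamily u u') (hz : phiE u c s = z) : s < z :=
  EReal.coe_lt_coe_iff.1 (hz ▸ hu.self_lt_phiE c s)

theorem apply_phiE_eq_zero (hu : IsTransversalFamily u u') (hz : phiE u c s = z) :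
    u c s z = 0 := by
  unfold phiE at hz
  split_ifs at hz with h
  · rw [← EReal.coe_injective hz]
    exact closure_minimal (fun t ht => ht.2) (isClosed_eq (hu.continuous_apply c s)
      continuous_const) (csInf_mem_closure h ⟨s, fun _ hr => hr.1.le⟩)
  · exact absurd hz.symm (EReal.coe_ne_top z)

theorem deriv_phiE_neg (hu : IsTransversalFamily u u') (hz : phiE u c s = z) :
    u' c s z < 0 := by
  have hsz := hu.lt_of_phiE_eq hz
  refine (hu.deriv_ne_zero hsz (hu.apply_phiE_eq_zero hz)).lt_of_le (le_of_not_gt fun hpos => ?_)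
  have hsign := eventually_nhdsWithin_sign_eq_of_deriv_pos (f := u c s)
    ((hu.hasDerivAt c s z).deriv.symm ▸ hpos) (hu.apply_phiE_eq_zero hz)
  obtain ⟨t, ht, hst, htz⟩ :=
    ((hsign.filter_mono nhdsWithin_le_nhds).and (Ioo_mem_nhdsLT hsz)).exists
  rw [sign_neg (sub_neg.2 htz), sign_eq_neg_one_iff] at ht
  exact ht.not_gt (hu.pos_of_lt_phiE hst (hz ▸ EReal.coe_lt_coe_iff.2 htz))

theorem exists_neg_of_phiE_lt (hu : IsTransversalFamily u u') (hx : phiE u c s < x) :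
    ∃ t : ℝ, s < t ∧ t < x ∧ u c s t < 0 := by
  obtain h | ⟨z, hz⟩ := phiE_eq_top_or_coe u c s
  · exact absurd hx (h ▸ not_top_lt)
  rw [hz] at hx
  obtain ⟨r, hzr, hrx⟩ := EReal.lt_iff_exists_real_btwn.1 hx
  have hdecr := eventually_nhdsGT_lt_of_hasDerivAt_neg (hu.hasDerivAt c s z) (hu.deriv_phiE_neg hz)
  obtain ⟨t, ht, hzt, htr⟩ := (hdecr.and (Ioo_mem_nhdsGT (EReal.coe_lt_coe_iff.1 hzr))).exists
  rw [hu.apply_phiE_eq_zero hz] at ht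
  exact ⟨t, (hu.lt_of_phiE_eq hz).trans hzt, (EReal.coe_lt_coe_iff.2 htr).trans hrx, ht⟩

theorem lt_phiE_iff (hu : IsTransversalFamily u u') :
    t < phiE u c s ↔ ∀ r ∈ Icc s t, 0 < segmentAverage (u' c s) s r := by
  refine ⟨fun ht r hr => ?_, fun h => lt_of_not_ge fun hle => ?_⟩
  · obtain rfl | hsr := hr.1.eq_or_lt
    · exact (segmentAverage_self _ _).symm ▸ hu.deriv_self_pos c s
    · have hpos := hu.pos_of_lt_phiE hsr ((EReal.coe_le_coe_iff.2 hr.2).trans_lt ht)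
      rw [hu.eq_mul_segmentAverage] at hpos
      exact pos_of_mul_pos_right hpos (sub_pos.2 hsr).le
  · obtain htop | ⟨z, hz⟩ := phiE_eq_top_or_coe u c s
    · exact EReal.coe_ne_top t (top_le_iff.1 (htop ▸ hle))
    have hsz := hu.lt_of_phiE_eq hz
    have hpos := mul_pos (sub_pos.2 hsz) (h z ⟨hsz.le, EReal.coe_le_coe_iff.1 (hz ▸ hle)⟩)
    rw [← hu.eq_mul_segmentAverage, hu.apply_phiE_eq_zero hz] at hpos
    exact hpos.false

theorem continuous_phiE (hu : IsTransversalFamily u u') :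
    Continuous fun y : ℝ × ℝ => phiE u y.1 y.2 := by
  refine continuous_iff_continuousAt.2 fun ⟨c, s⟩ =>
    tendsto_order.2 ⟨fun x hx => ?_, fun x hx => ?_⟩
  · obtain ⟨t, hxt, ht⟩ := EReal.lt_iff_exists_real_btwn.1 hx
    have hpos : ∀ᶠ y : ℝ × ℝ in 𝓝 (c, s), ∀ r ∈ Icc (s - 1) t,
        y.2 ≤ r → 0 < segmentAverage (u' y.1 y.2) y.2 r := by
      refine isCompact_Icc.eventually_forall_of_forall_eventually fun r hr => ?_
      obtain hrs | hsr := lt_or_ge r s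
      · exact ((continuous_snd.tendsto ((c, s), r)).eventually_lt
          (continuous_fst.snd.tendsto _) hrs).mono fun z hz h => absurd hz h.not_gt
      · have hcont := hu.continuous_segmentAverage_deriv.comp
          (by fun_prop : Continuous fun z : (ℝ × ℝ) × ℝ => (z.1.1, z.1.2, z.2))
        exact ((hcont.tendsto ((c, s), r)).eventually_const_lt
          (hu.lt_phiE_iff.1 ht r ⟨hsr, hr.2⟩)).mono fun z hz _ => hz
    filter_upwards [hpos, (continuous_snd.tendsto (c, s)).eventually_const_lt (sub_one_lt s)]
      with y hy hys
    exact hxt.trans (hu.lt_phiE_iff.2 fun r hr => hy r ⟨hys.le.trans hr.1, hr.2⟩ hr.1)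
  · obtain ⟨t, hst, htx, ht⟩ := hu.exists_neg_of_phiE_lt hx
    have hcont := hu.continuous.comp (by fun_prop : Continuous fun y : ℝ × ℝ => (y.1, y.2, t))
    filter_upwards [hcont.continuousAt.eventually_lt_const ht,
      (continuous_snd.tendsto (c, s)).eventually_lt_const hst] with y hy hyt
    exact (hu.phiE_lt_of_neg hyt hy).trans htx

theorem eventually_phiE_eq_coe_toReal (hu : IsTransversalFamily u u') (hz : phiE u c s = z) :
    ∀ᶠ y : ℝ × ℝ in 𝓝 (c, s), phiE u y.1 y.2 = (phiE u y.1 y.2).toReal := by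
  filter_upwards [hu.continuous_phiE.continuousAt.eventually_ne (hz ▸ EReal.coe_ne_top z)] with y hy
  exact (EReal.coe_toReal hy (hu.phiE_ne_bot y.1 y.2)).symm

theorem lt_phiStep (hu : IsTransversalFamily u u') (c : ℝ) (hx : x ≠ ⊤) : x < phiStep u c x := by
  induction x with
  | bot => simp [phiStep]
  | coe s => simpa using hu.self_lt_phiE c s
  | top => exact absurd rfl hx

theorem le_phiStep (hu : IsTransversalFamily u u') (c : ℝ) (x : EReal) : x ≤ phiStep u c x := by
  obtain rfl | hx := eq_or_ne x ⊤
  exacts [(phiStep_top u c).ge, (hu.lt_phiStep c hx).le]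

theorem continuousAt_phiStep (hu : IsTransversalFamily u u') (c : ℝ) (hx : x ≠ ⊥) :
    ContinuousAt (fun y : ℝ × EReal => phiStep u y.1 y.2) (c, x) := by
  induction x with
  | bot => exact absurd rfl hx
  | coe s =>
    have hfin : ∀ᶠ y : ℝ × EReal in 𝓝 (c, (s : EReal)), y.2 ≠ ⊤ ∧ y.2 ≠ ⊥ :=
      (continuous_snd.tendsto (c, (s : EReal))).eventually
        ((eventually_ne_nhds (EReal.coe_ne_top s)).and (eventually_ne_nhds (EReal.coe_ne_bot s)))
    have htoReal : ContinuousAt (fun y : ℝ × EReal => y.2.toReal) (c, (s : EReal)) :=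
      (EReal.tendsto_toReal (EReal.coe_ne_top s) (EReal.coe_ne_bot s)).comp
        (continuous_snd.tendsto (c, (s : EReal)))
    refine (hu.continuous_phiE.continuousAt.comp₂ continuousAt_fst htoReal).congr
      (hfin.mono fun y hy => ?_)
    simp [phiStep, hy]
  | top =>
    rw [ContinuousAt, phiStep_top]
    exact tendsto_of_tendsto_of_tendsto_of_le_of_le (continuous_snd.tendsto (c, ⊤))
      tendsto_const_nhds (fun y => hu.le_phiStep y.1 y.2) fun _ => le_top

end IsTransversalFamily

/-- The standing assumptions on a Sturm–Liouville equation `-(p u')' + q u = c w u`, together with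
its family of solutions `u c s`: continuous coefficients with `p > 0` and `q ≥ 0`, a weight `w` of
arbitrary sign, and derivatives `u'` depending continuously on `(c, s, t)`. -/
structure IsRegularSolFamily (p q w : ℝ → ℝ) (u u' : ℝ → ℝ → ℝ → ℝ) : Prop where
  continuous_p : Continuous p
  continuous_q : Continuous q
  continuous_w : Continuous w
  p_pos : ∀ t, 0 < p t
  q_nonneg : ∀ t, 0 ≤ q t
  isSolFamily : IsSolFamily p q w u u'
  continuous_deriv : Continuous fun x : ℝ × ℝ × ℝ => u' x.1 x.2.1 x.2.2

namespace IsRegularSolFamily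

variable {p q w : ℝ → ℝ} {u u' : ℝ → ℝ → ℝ → ℝ} {c c' s s' z : ℝ}

theorem hasDerivAt_flux (h : IsRegularSolFamily p q w u u') (c s t : ℝ) :
    HasDerivAt (fun τ => p τ * u' c s τ) ((q t - c * w t) * u c s t) t := by
  simpa only [sub_mul] using ((h.isSolFamily c s).2.2 t).2

theorem flux_self (h : IsRegularSolFamily p q w u u') (c s : ℝ) : p s * u' c s s = 1 := by
  rw [(h.isSolFamily c s).2.1, mul_one_div_cancel (h.p_pos s).ne']

theorem isTransversalFamily (h : IsRegularSolFamily p q w u u') : IsTransversalFamily u u' where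
  continuous_deriv := h.continuous_deriv
  hasDerivAt c s t := ((h.isSolFamily c s).2.2 t).1
  apply_self c s := (h.isSolFamily c s).1
  deriv_self_pos c s := pos_of_mul_pos_right ((h.flux_self c s).symm ▸ one_pos) (h.p_pos s).le
  deriv_ne_zero {c s t} hst ht ht' := by
    have hp := h.continuous_p
    have hq := h.continuous_q
    have hw := h.continuous_w
    have hflux := (eq_zero_of_hasDerivAt_mul_of_eq_zero_right (x := u c s)
      (y := fun t => p t * u' c s t) (α := fun t => (p t)⁻¹) (β := fun t => q t - c * w t)
      (hp.inv₀ fun t => (h.p_pos t).ne').continuousOn (by fun_prop)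
      (fun r _ => by simpa only [inv_mul_cancel_left₀ (h.p_pos r).ne'] using
        ((h.isSolFamily c s).2.2 r).1)
      (fun r _ => h.hasDerivAt_flux c s r) ht (by simp [ht']) s ⟨le_rfl, hst.le⟩).2
    exact one_ne_zero ((h.flux_self c s).symm.trans hflux)

theorem continuous_apply (h : IsRegularSolFamily p q w u u') (c s : ℝ) : Continuous (u c s) :=
  h.isTransversalFamily.continuous_apply c s

theorem continuous_deriv_apply (h : IsRegularSolFamily p q w u u') (c s : ℝ) :
    Continuous (u' c s) :=
  h.continuous_deriv.comp (by fun_prop : Continuous (c, s, ·))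

theorem integral_lagrange_identity (h : IsRegularSolFamily p q w u u') (c₁ s₁ c₂ s₂ a b : ℝ) :
    (c₁ - c₂) * ∫ t in a..b, w t * u c₁ s₁ t * u c₂ s₂ t =
      (u c₁ s₁ b * (p b * u' c₂ s₂ b) - p b * u' c₁ s₁ b * u c₂ s₂ b) -
        (u c₁ s₁ a * (p a * u' c₂ s₂ a) - p a * u' c₁ s₁ a * u c₂ s₂ a) := by
  have hw := h.continuous_w
  have hu₁ := h.continuous_apply c₁ s₁
  have hu₂ := h.continuous_apply c₂ s₂
  rw [← intervalIntegral.integral_const_mul]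
  refine intervalIntegral.integral_eq_sub_of_hasDerivAt (f := fun t =>
    u c₁ s₁ t * (p t * u' c₂ s₂ t) - p t * u' c₁ s₁ t * u c₂ s₂ t) (fun t _ => ?_)
    (Continuous.intervalIntegrable (by fun_prop) a b)
  exact (((h.isTransversalFamily.hasDerivAt c₁ s₁ t).mul (h.hasDerivAt_flux c₂ s₂ t)).sub
    ((h.hasDerivAt_flux c₁ s₁ t).mul (h.isTransversalFamily.hasDerivAt c₂ s₂ t))).congr_deriv
      (by ring)

theorem integral_energy_identity (h : IsRegularSolFamily p q w u u') (c s a b : ℝ) :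
    (∫ t in a..b, p t * u' c s t ^ 2 + q t * u c s t ^ 2) -
        c * ∫ t in a..b, w t * u c s t * u c s t =
      u c s b * (p b * u' c s b) - u c s a * (p a * u' c s a) := by
  have hp := h.continuous_p
  have hq := h.continuous_q
  have hw := h.continuous_w
  have hu := h.continuous_apply c s
  have hu' := h.continuous_deriv_apply c s
  rw [← intervalIntegral.integral_const_mul, ← intervalIntegral.integral_sub
    (Continuous.intervalIntegrable (by fun_prop) a b)
    (Continuous.intervalIntegrable (by fun_prop) a b)]
  refine intervalIntegral.integral_eq_sub_of_hasDerivAt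
    (f := fun t => u c s t * (p t * u' c s t)) (fun t _ => ?_)
    (Continuous.intervalIntegrable (by fun_prop) a b)
  exact ((h.isTransversalFamily.hasDerivAt c s t).mul (h.hasDerivAt_flux c s t)).congr_deriv
    (by ring)

theorem mul_integral_sq_pos (h : IsRegularSolFamily p q w u u') (hsz : s < z)
    (hz : u c s z = 0) : 0 < c * ∫ t in s..z, w t * u c s t * u c s t := by
  have hp := h.continuous_p
  have hq := h.continuous_q
  have hu := h.continuous_apply c s
  have hu' := h.continuous_deriv_apply c s
  have henergy : 0 < ∫ t in s..z, p t * u' c s t ^ 2 + q t * u c s t ^ 2 := by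
    refine intervalIntegral.integral_pos hsz (by fun_prop) (fun t _ => ?_)
      ⟨s, left_mem_Icc.2 hsz.le, ?_⟩
    · exact add_nonneg (mul_nonneg (h.p_pos t).le (sq_nonneg _))
        (mul_nonneg (h.q_nonneg t) (sq_nonneg _))
    · exact add_pos_of_pos_of_nonneg
        (mul_pos (h.p_pos s) (pow_pos (h.isTransversalFamily.deriv_self_pos c s) 2))
        (mul_nonneg (h.q_nonneg s) (sq_nonneg _))
  have hid := h.integral_energy_identity c s s z
  rw [hz, h.isTransversalFamily.apply_self, zero_mul, zero_mul, sub_zero, sub_eq_zero] at hid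
  exact henergy.trans_eq hid

theorem param_pos (h : IsRegularSolFamily p q w u u') (hc : 0 ≤ c) (hz : phiE u c s = z) :
    0 < c := by
  refine hc.lt_of_ne ?_
  rintro rfl
  simpa using h.mul_integral_sq_pos (h.isTransversalFamily.lt_of_phiE_eq hz)
    (h.isTransversalFamily.apply_phiE_eq_zero hz)

-- Lagrange's identity on `[s₂, z₂]`, with the boundary terms written as difference quotients.
theorem sub_mul_eq_of_apply_eq_zero (h : IsRegularSolFamily p q w u u') {c₁ s₁ z₁ c₂ s₂ z₂ : ℝ}
    (h₁ : u c₁ s₁ z₁ = 0) (h₂ : u c₂ s₂ z₂ = 0) :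
    (z₁ - z₂) * (p z₂ * u' c₂ s₂ z₂ * segmentAverage (u' c₁ s₁) z₁ z₂) =
      (s₁ - s₂) * segmentAverage (u' c₁ s₁) s₁ s₂ -
        (c₁ - c₂) * ∫ t in s₂..z₂, w t * u c₁ s₁ t * u c₂ s₂ t := by
  have hs : u c₁ s₁ s₂ = (s₂ - s₁) * segmentAverage (u' c₁ s₁) s₁ s₂ :=
    h.isTransversalFamily.eq_mul_segmentAverage c₁ s₁ s₂
  have hz : u c₁ s₁ z₂ = (z₂ - z₁) * segmentAverage (u' c₁ s₁) z₁ z₂ := by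
    rw [← h.isTransversalFamily.apply_sub_apply, h₁, sub_zero]
  rw [h.integral_lagrange_identity, h₂, h.isTransversalFamily.apply_self c₂, h.flux_self, hs, hz]
  ring

theorem continuous_integral_mul_mul (h : IsRegularSolFamily p q w u u') :
    Continuous fun x : (ℝ × ℝ × ℝ) × ℝ × ℝ × ℝ =>
      ∫ t in x.2.2.1..x.2.2.2, w t * u x.1.1 x.1.2.1 t * u x.2.1 x.2.2.1 t := by
  have hw := h.continuous_w
  have hu₁ : Continuous fun y : ((ℝ × ℝ × ℝ) × ℝ × ℝ × ℝ) × ℝ => u y.1.1.1 y.1.1.2.1 y.2 :=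
    h.isTransversalFamily.continuous.comp
      (by fun_prop : Continuous fun y : ((ℝ × ℝ × ℝ) × ℝ × ℝ × ℝ) × ℝ =>
        (y.1.1.1, y.1.1.2.1, y.2))
  have hu₂ : Continuous fun y : ((ℝ × ℝ × ℝ) × ℝ × ℝ × ℝ) × ℝ => u y.1.2.1 y.1.2.2.1 y.2 :=
    h.isTransversalFamily.continuous.comp
      (by fun_prop : Continuous fun y : ((ℝ × ℝ × ℝ) × ℝ × ℝ × ℝ) × ℝ =>
        (y.1.2.1, y.1.2.2.1, y.2))
  simp only [← sub_mul_segmentAverage]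
  exact (by fun_prop : Continuous fun x : (ℝ × ℝ × ℝ) × ℝ × ℝ × ℝ => x.2.2.2 - x.2.2.1).mul
    (continuous_segmentAverage (((hw.comp continuous_snd).mul hu₁).mul hu₂)
      (by fun_prop) (by fun_prop))

theorem continuous_deriv_mul_segmentAverage (h : IsRegularSolFamily p q w u u') :
    Continuous fun x : (ℝ × ℝ × ℝ) × ℝ × ℝ × ℝ =>
      p x.2.2.2 * u' x.2.1 x.2.2.1 x.2.2.2 *
        segmentAverage (u' x.1.1 x.1.2.1) x.1.2.2 x.2.2.2 := by
  have hp := h.continuous_p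
  have hu' := h.continuous_deriv
  have hu'₁ : Continuous fun y : ((ℝ × ℝ × ℝ) × ℝ × ℝ × ℝ) × ℝ => u' y.1.1.1 y.1.1.2.1 y.2 :=
    hu'.comp (by fun_prop : Continuous fun y : ((ℝ × ℝ × ℝ) × ℝ × ℝ × ℝ) × ℝ =>
      (y.1.1.1, y.1.1.2.1, y.2))
  exact ((hp.comp continuous_snd.snd.snd).mul (hu'.comp continuous_snd)).mul
    (continuous_segmentAverage hu'₁ (by fun_prop) (by fun_prop))

theorem exists_hasStrictFDerivAt_phiE (h : IsRegularSolFamily p q w u u') (hc : 0 ≤ c)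
    (hz : phiE u c s = z) :
    ∃ A < (0 : ℝ), ∃ B > (0 : ℝ), HasStrictFDerivAt (fun y : ℝ × ℝ => (phiE u y.1 y.2).toReal)
      (A • .fst ℝ ℝ ℝ + B • .snd ℝ ℝ ℝ : ℝ × ℝ →L[ℝ] ℝ) (c, s) := by
  have hu := h.isTransversalFamily
  have hI : 0 < ∫ t in s..z, w t * u c s t * u c s t :=
    pos_of_mul_pos_right (h.mul_integral_sq_pos (hu.lt_of_phiE_eq hz) (hu.apply_phiE_eq_zero hz)) hc
  have hD : 0 < p z * u' c s z * u' c s z := by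
    rw [mul_assoc]
    exact mul_pos (h.p_pos z) (mul_self_pos.2 (hu.deriv_phiE_neg hz).ne)
  set Z : ℝ × ℝ → ℝ := fun y => (phiE u y.1 y.2).toReal
  have hZ : Tendsto Z (𝓝 (c, s)) (𝓝 z) := (EReal.tendsto_toReal (EReal.coe_ne_top z)
    (EReal.coe_ne_bot z)).comp (hz ▸ hu.continuous_phiE.tendsto (c, s))
  have hfin : ∀ᶠ y : ℝ × ℝ in 𝓝 (c, s), phiE u y.1 y.2 = Z y := hu.eventually_phiE_eq_coe_toReal hz
  have hZ₁ : Tendsto (fun y : (ℝ × ℝ) × ℝ × ℝ => (y.1.1, y.1.2, Z y.1)) (𝓝 ((c, s), c, s))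
      (𝓝 (c, s, z)) :=
    (continuous_fst.fst.tendsto _).prodMk_nhds ((continuous_fst.snd.tendsto _).prodMk_nhds
      (hZ.comp (continuous_fst.tendsto _)))
  have hZ₂ : Tendsto (fun y : (ℝ × ℝ) × ℝ × ℝ => (y.2.1, y.2.2, Z y.2)) (𝓝 ((c, s), c, s))
      (𝓝 (c, s, z)) :=
    (continuous_snd.fst.tendsto _).prodMk_nhds ((continuous_snd.snd.tendsto _).prodMk_nhds
      (hZ.comp (continuous_snd.tendsto _)))
  have hP := hZ₁.prodMk_nhds hZ₂
  have hs : Tendsto (fun y : (ℝ × ℝ) × ℝ × ℝ => (y.1.1, y.1.2, y.2.2)) (𝓝 ((c, s), c, s))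
      (𝓝 (c, s, s)) := Continuous.tendsto' (by fun_prop) _ _ rfl
  have hderiv := hasStrictFDerivAt_prod_of_eventually_sub_mul_eq (f := Z) ?_
    ((h.continuous_deriv_mul_segmentAverage.tendsto _).comp hP)
    ((h.continuous_integral_mul_mul.tendsto _).comp hP).neg
    ((hu.continuous_segmentAverage_deriv.tendsto _).comp hs) ?_
  · simp only [segmentAverage_self] at hderiv
    refine ⟨_, ?_, _, ?_, hderiv⟩
    exacts [div_neg_of_neg_of_pos (neg_neg_of_pos hI) hD, div_pos (hu.deriv_self_pos c s) hD]
  · filter_upwards [continuous_fst.continuousAt.eventually hfin,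
      continuous_snd.continuousAt.eventually hfin] with y hy₁ hy₂
    simp only [Function.comp_apply]
    linear_combination
      h.sub_mul_eq_of_apply_eq_zero (hu.apply_phiE_eq_zero hy₁) (hu.apply_phiE_eq_zero hy₂)
  · simpa only [segmentAverage_self] using hD.ne'

theorem phiE_lt_phiE (h : IsRegularSolFamily p q w u u') (hc : 0 ≤ c) (hcc' : c < c')
    (hs : s' ≤ s) (hfin : phiE u c s ≠ ⊤) : phiE u c' s' < phiE u c s := by
  have hu := h.isTransversalFamily
  refine lt_of_hasFDerivAt_neg_of_ne_top (F := fun y : ℝ × ℝ => phiE u y.1 y.2) (x := (c, s))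
    (y := (c', s')) hu.continuous_phiE.continuousOn
    (fun y _ => hu.phiE_ne_bot y.1 y.2) (fun y hy htop => ?_) hfin
  have hy₁ : y.1 ∈ Icc c c' := segment_eq_Icc (𝕜 := ℝ) hcc'.le ▸ (Prod.segment_subset _ _ hy).1
  obtain ⟨z, hz⟩ := (phiE_eq_top_or_coe u y.1 y.2).resolve_left htop
  obtain ⟨A, hA, B, hB, hderiv⟩ := h.exists_hasStrictFDerivAt_phiE (hc.trans hy₁.1) hz
  refine ⟨_, hderiv.hasFDerivAt, ?_⟩
  have hA' : A * (c' - c) < 0 := mul_neg_of_neg_of_pos hA (sub_pos.2 hcc')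
  have hB' : B * (s' - s) ≤ 0 := mul_nonpos_of_nonneg_of_nonpos hB.le (sub_nonpos.2 hs)
  simpa using add_neg_of_neg_of_nonpos hA' hB'

theorem exists_hasStrictFDerivAt_phiStep (h : IsRegularSolFamily p q w u u') {E : Type*}
    [NormedAddCommGroup E] [NormedSpace ℝ E] {G : E → EReal} {L ℓ : E →L[ℝ] ℝ} {y : E}
    (hG : ContinuousAt G y) (hbot : G y ≠ ⊥) (hfin : phiStep u (ℓ y) (G y) ≠ ⊤)
    (hL : HasStrictFDerivAt (fun y => (G y).toReal) L y) (hc : 0 ≤ ℓ y) :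
    ∃ A < (0 : ℝ), ∃ B > (0 : ℝ),
      HasStrictFDerivAt (fun y => (phiStep u (ℓ y) (G y)).toReal) (A • ℓ + B • L) y := by
  have htop : G y ≠ ⊤ := fun hG_top => hfin (by rw [hG_top, phiStep_top])
  rw [← EReal.coe_toReal htop hbot, phiStep_coe] at hfin
  obtain ⟨z, hz⟩ := (phiE_eq_top_or_coe u _ _).resolve_left hfin
  obtain ⟨A, hA, B, hB, hderiv⟩ := h.exists_hasStrictFDerivAt_phiE hc hz
  have hcomp : HasStrictFDerivAt (fun y => (phiE u (ℓ y) (G y).toReal).toReal) (A • ℓ + B • L) y :=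
    (hderiv.comp y (ℓ.hasStrictFDerivAt.prodMk hL)).congr_fderiv (by ext; simp)
  refine ⟨A, hA, B, hB, hcomp.congr_of_eventuallyEq ?_⟩
  filter_upwards [hG.eventually_ne htop, hG.eventually_ne hbot] with y hy_top hy_bot
  simp [phiStep, hy_top, hy_bot]

end IsRegularSolFamily

section PhiGt

variable {uM uM' uN uN' : ℝ → ℝ → ℝ → ℝ} {a b T₁ : ℝ} {k : ℕ}

theorem PhiGt_succ_apply (uM uN : ℝ → ℝ → ℝ → ℝ) (a b : ℝ) (k : ℕ) (x : EReal) :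
    PhiGt uM uN a b (k + 1) x =
      if k % 2 = 0 then phiStep uM a (PhiGt uM uN a b k x)
      else phiStep uN b (PhiGt uM uN a b k x) := by
  rw [PhiGt]
  split_ifs <;> rfl

theorem monotone_PhiGt (hM : IsTransversalFamily uM uM') (hN : IsTransversalFamily uN uN')
    (a b : ℝ) (x : EReal) : Monotone fun k => PhiGt uM uN a b k x := by
  refine monotone_nat_of_le_succ fun k => ?_
  rw [PhiGt_succ_apply]
  split_ifs
  exacts [hM.le_phiStep a _, hN.le_phiStep b _]

theorem PhiGt_ne_bot (hM : IsTransversalFamily uM uM') (hN : IsTransversalFamily uN uN')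
    (a b : ℝ) (k : ℕ) {x : EReal} (hx : x ≠ ⊥) : PhiGt uM uN a b k x ≠ ⊥ :=
  ne_bot_of_le_ne_bot hx (monotone_PhiGt hM hN a b x k.zero_le)

theorem continuous_PhiGt (hM : IsTransversalFamily uM uM') (hN : IsTransversalFamily uN uN')
    (k : ℕ) {x : EReal} (hx : x ≠ ⊥) :
    Continuous fun y : ℝ × ℝ => PhiGt uM uN y.1 y.2 k x := by
  induction k with
  | zero => exact continuous_const
  | succ k ih =>
    simp only [PhiGt_succ_apply]
    refine continuous_iff_continuousAt.2 fun y => ?_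
    have hbot := PhiGt_ne_bot hM hN y.1 y.2 k hx
    split_ifs
    · exact (hM.continuousAt_phiStep y.1 hbot).comp₂ continuousAt_fst ih.continuousAt
    · exact (hN.continuousAt_phiStep y.2 hbot).comp₂ continuousAt_snd ih.continuousAt

theorem exists_phiE_eq_of_PhiGt_ne_top (hM : IsTransversalFamily uM uM')
    (hN : IsTransversalFamily uN uN') (hk : 2 ≤ k) (hfin : PhiGt uM uN a b k T₁ ≠ ⊤) :
    ∃ s z : ℝ, phiE uM a T₁ = s ∧ phiE uN b s = z ∧ z ≤ PhiGt uM uN a b k T₁ := by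
  have hle : phiStep uN b (phiE uM a T₁) ≤ PhiGt uM uN a b k T₁ := by
    simpa [PhiGt] using monotone_PhiGt hM hN a b T₁ hk
  obtain hs | ⟨s, hs⟩ := phiE_eq_top_or_coe uM a T₁
  · rw [hs, phiStep_top, top_le_iff] at hle
    exact absurd hle hfin
  rw [hs, phiStep_coe] at hle
  obtain hz | ⟨z, hz⟩ := phiE_eq_top_or_coe uN b s
  · rw [hz, top_le_iff] at hle
    exact absurd hle hfin
  · exact ⟨s, z, hs, hz, hz ▸ hle⟩

variable {p₁ q₁ m p₂ q₂ n : ℝ → ℝ} {T₂ lam : ℝ}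

theorem exists_hasStrictFDerivAt_PhiGt (hM : IsRegularSolFamily p₁ q₁ m uM uM')
    (hN : IsRegularSolFamily p₂ q₂ n uN uN') {y : ℝ × ℝ} (hy : 0 ≤ y)
    (hfin : PhiGt uM uN y.1 y.2 k T₁ ≠ ⊤) :
    ∃ L : ℝ × ℝ →L[ℝ] ℝ,
      HasStrictFDerivAt (fun y : ℝ × ℝ => (PhiGt uM uN y.1 y.2 k T₁).toReal) L y ∧
      L (1, 0) ≤ 0 ∧ L (0, 1) ≤ 0 ∧ (1 ≤ k → L (1, 0) < 0) ∧ (2 ≤ k → L (0, 1) < 0) := by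
  have hM' := hM.isTransversalFamily
  have hN' := hN.isTransversalFamily
  induction k with
  | zero => exact ⟨0, hasStrictFDerivAt_const _ _, by simp⟩
  | succ k ih =>
    have hle := monotone_PhiGt hM' hN' y.1 y.2 T₁ k.le_succ
    obtain ⟨L, hL, h₁, h₂, h₁', h₂'⟩ := ih (ne_top_of_le_ne_top hfin hle)
    have hcont := (continuous_PhiGt hM' hN' k (EReal.coe_ne_bot T₁)).continuousAt (x := y)
    have hbot := PhiGt_ne_bot hM' hN' y.1 y.2 k (EReal.coe_ne_bot T₁)
    simp only [PhiGt_succ_apply] at hfin ⊢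
    split_ifs at hfin ⊢ with hpar
    · obtain ⟨A, hA, B, hB, hderiv⟩ := hM.exists_hasStrictFDerivAt_phiStep
        (ℓ := .fst ℝ ℝ ℝ) hcont hbot hfin hL hy.1
      refine ⟨_, hderiv, ?_⟩
      simp only [add_apply, smul_apply, ContinuousLinearMap.coe_fst', smul_eq_mul, mul_one,
        mul_zero, zero_add]
      have hB₁ : B * L (1, 0) ≤ 0 := mul_nonpos_of_nonneg_of_nonpos hB.le h₁
      have hA₁ : A + B * L (1, 0) < 0 := add_neg_of_neg_of_nonpos hA hB₁
      exact ⟨hA₁.le, mul_nonpos_of_nonneg_of_nonpos hB.le h₂, fun _ => hA₁,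
        fun hk => mul_neg_of_pos_of_neg hB (h₂' (by omega))⟩
    · obtain ⟨A, hA, B, hB, hderiv⟩ := hN.exists_hasStrictFDerivAt_phiStep
        (ℓ := .snd ℝ ℝ ℝ) hcont hbot hfin hL hy.2
      refine ⟨_, hderiv, ?_⟩
      simp only [add_apply, smul_apply, ContinuousLinearMap.coe_snd', smul_eq_mul, mul_one,
        mul_zero, zero_add]
      have hB₂ : B * L (0, 1) ≤ 0 := mul_nonpos_of_nonneg_of_nonpos hB.le h₂
      have hA₂ : A + B * L (0, 1) < 0 := add_neg_of_neg_of_nonpos hA hB₂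
      exact ⟨mul_nonpos_of_nonneg_of_nonpos hB.le h₁, hA₂.le,
        fun _ => mul_neg_of_pos_of_neg hB (h₁' (by omega)), fun _ => hA₂⟩

theorem isDecreasingOffAxes_PhiGt (hM : IsRegularSolFamily p₁ q₁ m uM uM')
    (hN : IsRegularSolFamily p₂ q₂ n uN uN') (hk : 2 ≤ k) (T₁ : ℝ) :
    IsDecreasingOffAxes fun y => PhiGt uM uN y.1 y.2 k T₁ where
  continuous :=
    continuous_PhiGt hM.isTransversalFamily hN.isTransversalFamily k (EReal.coe_ne_bot T₁)
  ne_bot y :=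
    PhiGt_ne_bot hM.isTransversalFamily hN.isTransversalFamily y.1 y.2 k (EReal.coe_ne_bot T₁)
  pos_of_ne_top hy hfin := by
    obtain ⟨s, z, hs, hz, -⟩ := exists_phiE_eq_of_PhiGt_ne_top hM.isTransversalFamily
      hN.isTransversalFamily hk hfin
    exact ⟨hM.param_pos hy.1 hs, hN.param_pos hy.2 hz⟩
  exists_hasStrictFDerivAt hy hfin := by
    obtain ⟨L, hL, -, -, h₁, h₂⟩ := exists_hasStrictFDerivAt_PhiGt hM hN hy hfin
    exact ⟨L, hL, h₁ (one_le_two.trans hk), h₂ hk⟩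

theorem le_fst_of_mem_CGt (hM : IsRegularSolFamily p₁ q₁ m uM uM')
    (hN : IsTransversalFamily uN uN') (hk : 2 ≤ k) (hlam : phiE uM lam T₁ = T₂)
    (hab : (a, b) ∈ CGt uM uN T₁ T₂ k) : lam ≤ a := by
  obtain ⟨ha, -, hT⟩ : 0 < a ∧ 0 < b ∧ PhiGt uM uN a b k T₁ = T₂ := hab
  obtain ⟨s, z, hs, hz, hzT⟩ := exists_phiE_eq_of_PhiGt_ne_top hM.isTransversalFamily hN hk
    (hT ▸ EReal.coe_ne_top T₂)
  by_contra! hlt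
  have hT₂s := hM.phiE_lt_phiE ha.le hlt le_rfl (hs ▸ EReal.coe_ne_top s)
  rw [hlam, hs] at hT₂s
  exact (hT₂s.trans (EReal.coe_lt_coe_iff.2 (hN.lt_of_phiE_eq hz))).not_ge (hT ▸ hzT)

theorem le_snd_of_mem_CGt (hM : IsTransversalFamily uM uM')
    (hN : IsRegularSolFamily p₂ q₂ n uN uN') (hk : 2 ≤ k) (hlam : phiE uN lam T₁ = T₂)
    (hab : (a, b) ∈ CGt uM uN T₁ T₂ k) : lam ≤ b := by
  obtain ⟨-, hb, hT⟩ : 0 < a ∧ 0 < b ∧ PhiGt uM uN a b k T₁ = T₂ := hab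
  obtain ⟨s, z, hs, hz, hzT⟩ := exists_phiE_eq_of_PhiGt_ne_top hM hN.isTransversalFamily hk
    (hT ▸ EReal.coe_ne_top T₂)
  by_contra! hlt
  have hT₂z := hN.phiE_lt_phiE hb.le hlt (hM.lt_of_phiE_eq hs).le (hz ▸ EReal.coe_ne_top z)
  rw [hlam, hz] at hT₂z
  exact hT₂z.not_ge (hT ▸ hzT)

end PhiGt

theorem CGt_is_hyperbolic_curve_general {p₁ q₁ m p₂ q₂ n : ℝ → ℝ} {uM uM' uN uN' : ℝ → ℝ → ℝ → ℝ}
    {T₁ T₂ lam1M lam1N : ℝ} {k : ℕ} (hk : 2 ≤ k) (hM : IsRegularSolFamily p₁ q₁ m uM uM')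
    (hN : IsRegularSolFamily p₂ q₂ n uN uN') (hlamM : phiE uM lam1M T₁ = T₂)
    (hlamN : phiE uN lam1N T₁ = T₂) (hne : (CGt uM uN T₁ T₂ k).Nonempty) :
    ∃ ν μ : ℝ, lam1M ≤ ν ∧ lam1N ≤ μ ∧
      ∃ f : ℝ → ℝ,
        StrictAntiOn f (Ioi ν) ∧
        ContDiffOn ℝ 1 f (Ioi ν) ∧
        (∀ x ∈ Ioi ν, deriv f x < 0) ∧
        f '' Ioi ν = Ioi μ ∧
        CGt uM uN T₁ T₂ k = {ab : ℝ × ℝ | ab.1 ∈ Ioi ν ∧ ab.2 = f ab.1} ∧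
        Tendsto f (𝓝[>] ν) atTop := by
  obtain ⟨ν, μ, f, hanti, hC1, hderiv, himage, hgraph, hlim⟩ :=
    (isDecreasingOffAxes_PhiGt hM hN hk T₁).exists_quadrantLevelSet_eq_graph hne
  have hmem : ∀ x ∈ Ioi ν, (x, f x) ∈ CGt uM uN T₁ T₂ k := fun x hx => hgraph.ge ⟨hx, rfl⟩
  have hν : Ioi ν ⊆ Ici lam1M := fun x hx =>
    le_fst_of_mem_CGt hM hN.isTransversalFamily hk hlamM (hmem x hx)
  have hμ : f '' Ioi ν ⊆ Ici lam1N := image_subset_iff.2 fun x hx =>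
    le_snd_of_mem_CGt hM.isTransversalFamily hN hk hlamN (hmem x hx)
  exact ⟨ν, μ, Ioi_subset_Ici_iff.1 hν, Ioi_subset_Ici_iff.1 (himage ▸ hμ), f, hanti, hC1, hderiv,
    himage, hgraph, hlim⟩

/-- If `k ≥ 2` and `C_k^{>++}` is nonempty, then it is a
hyperbolic-like curve: there are `ν_k ≥ λ₁^m`, `μ_k ≥ λ₁^n` and a strictly
decreasing `C¹` function `f_k : (ν_k,∞) → (μ_k,∞)`, onto, with `f_k' < 0`,
whose graph is exactly `C_k^{>++}`; moreover `f_k(x) → +∞` as `x → ν_k⁺`.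
Here `λ₁^m` (resp. `λ₁^n`) is the unique positive `a` with `φ_a^m(T₁) = T₂`
(resp. `φ_b^n(T₁) = T₂`). -/
theorem CGt_is_hyperbolic_curve
    (p q m n : ℝ → ℝ) (uM uM' uN uN' : ℝ → ℝ → ℝ → ℝ) (T₁ T₂ lam1M lam1N : ℝ)
    (k : ℕ) (hk : 2 ≤ k) (hT : T₁ < T₂)
    (hp : Continuous p) (hq : Continuous q) (hm : Continuous m) (hn : Continuous n)
    (hppos : ∀ t, 0 < p t) (hqnn : ∀ t, 0 ≤ q t)
    (hM : IsSolFamily p q m uM uM') (hN : IsSolFamily p q n uN uN')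
    (hcM : Continuous fun x : ℝ × ℝ × ℝ => uM x.1 x.2.1 x.2.2)
    (hcM' : Continuous fun x : ℝ × ℝ × ℝ => uM' x.1 x.2.1 x.2.2)
    (hcN : Continuous fun x : ℝ × ℝ × ℝ => uN x.1 x.2.1 x.2.2)
    (hcN' : Continuous fun x : ℝ × ℝ × ℝ => uN' x.1 x.2.1 x.2.2)
    (hmplus : ∃ t ∈ Ioo T₁ T₂, 0 < m t) (hnplus : ∃ t ∈ Ioo T₁ T₂, 0 < n t)
    (hlamM : 0 < lam1M ∧ phiE uM lam1M T₁ = (T₂ : EReal))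
    (hlamN : 0 < lam1N ∧ phiE uN lam1N T₁ = (T₂ : EReal))
    (hne : (CGt uM uN T₁ T₂ k).Nonempty) :
    ∃ ν μ : ℝ, lam1M ≤ ν ∧ lam1N ≤ μ ∧
      ∃ f : ℝ → ℝ,
        StrictAntiOn f (Ioi ν) ∧
        (∀ x ∈ Ioi ν, ∃ d : ℝ, d < 0 ∧ HasDerivAt f d x) ∧
        f '' (Ioi ν) = Ioi μ ∧
        CGt uM uN T₁ T₂ k = {ab : ℝ × ℝ | ab.1 ∈ Ioi ν ∧ ab.2 = f ab.1} ∧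
        Tendsto f (nhdsWithin ν (Ioi ν)) atTop := by
  obtain ⟨ν, μ, hν, hμ, f, hanti, -, hderiv, hcurve⟩ := CGt_is_hyperbolic_curve_general hk
    ⟨hp, hq, hm, hppos, hqnn, hM, hcM'⟩ ⟨hp, hq, hn, hppos, hqnn, hN, hcN'⟩ hlamM.2 hlamN.2 hne
  exact ⟨ν, μ, hν, hμ, f, hanti, fun x hx => ⟨_, hderiv x hx,
    (differentiableAt_of_deriv_ne_zero (hderiv x hx).ne).hasDerivAt⟩, hcurve⟩
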